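/- Optimal cleavage direction for the rotated triangular lattice: let φ ∈ [0, π/3), let T_φ ∈ SO(2) be the rotation by angle φ, and set ν₁ = T_φ(1,0)ᵀ, ν₂ = T_φ(1/2, √3/2)ᵀ, ν₃ = T_φ(−1/2, √3/2)ᵀ. Then for any β̄ > 0, the minimum over unit vectors ς ∈ S¹ with e₁·ς ≠ 0 of β̄(|ν₁·ς| + |ν₂·ς| + |ν₃·ς|)/|e₁·ς| equals √3·β̄ / sin(φ + π/3), and it is attained at the unit vector orthogonal to ν₂. -/

import Mathlib

noncomputable section

namespace Cleavage

/-- rotation of the plane by the angle `φ`. -/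
def rotM (φ : ℝ) : Matrix (Fin 2) (Fin 2) ℝ :=
  !![Real.cos φ, -Real.sin φ; Real.sin φ, Real.cos φ]

/-- the nearest-neighbour bond directions of the rotated triangular lattice. -/
def nuTri1 (φ : ℝ) : Fin 2 → ℝ := (rotM φ).mulVec ![1, 0]
def nuTri2 (φ : ℝ) : Fin 2 → ℝ := (rotM φ).mulVec ![1 / 2, Real.sqrt 3 / 2]
def nuTri3 (φ : ℝ) : Fin 2 → ℝ := (rotM φ).mulVec ![-(1 / 2), Real.sqrt 3 / 2]

/-- the Euclidean inner product on the plane. -/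
def dot2 (v w : Fin 2 → ℝ) : ℝ := v 0 * w 0 + v 1 * w 1

/-- `ς ∈ S¹`. -/
def unit2 (ς : Fin 2 → ℝ) : Prop := ς 0 ^ 2 + ς 1 ^ 2 = 1

/-- the fracture-energy quotient `β̄(|ν₁·ς| + |ν₂·ς| + |ν₃·ς|)/|e₁·ς|`. -/
def FTri (φ b : ℝ) (ς : Fin 2 → ℝ) : ℝ :=
  b * (|dot2 (nuTri1 φ) ς| + |dot2 (nuTri2 φ) ς| + |dot2 (nuTri3 φ) ς|) / |ς 0|

/-!
Since `ν₃ = ν₂ - ν₁`, the numbers `|νᵢ · ς|` are the side lengths of a degenerate triangle with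
vertices `0`, `ν₁ · ς` and `ν₂ · ς`, and each side is at most half the perimeter `P`. On the other
hand `(√3/2) e₁ = sin(φ + π/3) ν₁ - sin φ ν₂ = (sin(φ + π/3) - sin φ) ν₁ - sin φ ν₃`. For
`0 ≤ φ ≤ π/3` the absolute values of the coefficients on the right add up to `sin(φ + π/3)`, so
`√3 |e₁ · ς| ≤ sin(φ + π/3) P`, with equality when `ν₂ · ς = 0`.
-/

open Real

/-- The unit vector at angle `θ` to `e₁`, in which the bond directions and the normals to them are
expressed. -/
def unitDirection (θ : ℝ) : Fin 2 → ℝ := ![cos θ, sin θ]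

theorem rotM_mulVec_unitDirection (φ θ : ℝ) :
    (rotM φ).mulVec (unitDirection θ) = unitDirection (φ + θ) := by
  ext i
  fin_cases i <;> simp [rotM, unitDirection, cos_add, sin_add] <;> ring

theorem nuTri1_eq_unitDirection (φ : ℝ) : nuTri1 φ = unitDirection φ := by
  simpa [nuTri1, unitDirection] using rotM_mulVec_unitDirection φ 0

theorem nuTri2_eq_unitDirection (φ : ℝ) : nuTri2 φ = unitDirection (φ + π / 3) := by
  simpa [nuTri2, unitDirection] using rotM_mulVec_unitDirection φ (π / 3)

theorem nuTri3_eq_sub (φ : ℝ) : nuTri3 φ = nuTri2 φ - nuTri1 φ := by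
  rw [nuTri1, nuTri2, nuTri3, ← Matrix.mulVec_sub]
  congr 1
  ext i
  fin_cases i <;> norm_num

theorem sin_smul_unitDirection_sub (α β : ℝ) :
    sin β • unitDirection α - sin α • unitDirection β = sin (β - α) • ![1, 0] := by
  ext i
  fin_cases i <;> simp [unitDirection, sin_sub] <;> ring

theorem dot2_eq_dotProduct (v w : Fin 2 → ℝ) : dot2 v w = v ⬝ᵥ w := by
  simp [dot2, dotProduct]

theorem sin_mul_dot2_unitDirection_sub (α β : ℝ) (ς : Fin 2 → ℝ) :
    sin β * dot2 (unitDirection α) ς - sin α * dot2 (unitDirection β) ς = sin (β - α) * ς 0 := by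
  have h := congrArg (· ⬝ᵥ ς) (sin_smul_unitDirection_sub α β)
  simpa [dot2_eq_dotProduct, sub_dotProduct, smul_dotProduct, Matrix.vecHead] using h

theorem sin_mul_dot2_nuTri1_sub (φ : ℝ) (ς : Fin 2 → ℝ) :
    sin (φ + π / 3) * dot2 (nuTri1 φ) ς - sin φ * dot2 (nuTri2 φ) ς = √3 / 2 * ς 0 := by
  rw [nuTri1_eq_unitDirection, nuTri2_eq_unitDirection, sin_mul_dot2_unitDirection_sub,
    add_sub_cancel_left, sin_pi_div_three]

theorem FTri_eq (φ b : ℝ) (ς : Fin 2 → ℝ) :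
    FTri φ b ς = b * (|dot2 (nuTri1 φ) ς| + |dot2 (nuTri2 φ) ς| +
      |dot2 (nuTri2 φ) ς - dot2 (nuTri1 φ) ς|) / |ς 0| := by
  simp only [FTri, nuTri3_eq_sub, dot2_eq_dotProduct, sub_dotProduct]

theorem two_mul_norm_smul_sub_smul_le {E : Type*} [SeminormedAddCommGroup E] [NormedSpace ℝ E]
    {s t : ℝ} (hs : 0 ≤ s) (hst : s ≤ t) (x y : E) :
    2 * ‖t • x - s • y‖ ≤ t * (‖x‖ + ‖y‖ + ‖y - x‖) := by
  have split : t • x - s • y = (t - s) • x - s • (y - x) := by module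
  have side₁ : 2 * ‖x‖ ≤ ‖x‖ + ‖y‖ + ‖y - x‖ := by
    linarith [norm_le_norm_add_norm_sub y x]
  have side₃ : 2 * ‖y - x‖ ≤ ‖x‖ + ‖y‖ + ‖y - x‖ := by
    linarith [norm_sub_le y x]
  have hts : 0 ≤ t - s := sub_nonneg.2 hst
  calc 2 * ‖t • x - s • y‖
      ≤ 2 * (‖(t - s) • x‖ + ‖s • (y - x)‖) := by rw [split]; gcongr; exact norm_sub_le _ _
    _ = (t - s) * (2 * ‖x‖) + s * (2 * ‖y - x‖) := by
        rw [norm_smul_of_nonneg hts, norm_smul_of_nonneg hs]; ring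
    _ ≤ (t - s) * (‖x‖ + ‖y‖ + ‖y - x‖) + s * (‖x‖ + ‖y‖ + ‖y - x‖) := by gcongr
    _ = t * (‖x‖ + ‖y‖ + ‖y - x‖) := by ring

theorem sin_le_sin_add_pi_div_three {φ : ℝ} (hφ0 : 0 ≤ φ) (hφ1 : φ ≤ π / 3) :
    sin φ ≤ sin (φ + π / 3) := by
  have difference : sin (φ + π / 3) - sin φ = sin (π / 3 - φ) := by
    rw [sin_add, sin_sub, sin_pi_div_three, cos_pi_div_three]; ring
  have : 0 ≤ sin (π / 3 - φ) :=
    sin_nonneg_of_nonneg_of_le_pi (by linarith) (by linarith [pi_pos])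
  linarith

theorem sqrt_three_mul_abs_le_sin_mul_sum {φ : ℝ} (hφ0 : 0 ≤ φ) (hφ1 : φ ≤ π / 3) (ς : Fin 2 → ℝ) :
    √3 * |ς 0| ≤ sin (φ + π / 3) * (|dot2 (nuTri1 φ) ς| + |dot2 (nuTri2 φ) ς| +
      |dot2 (nuTri2 φ) ς - dot2 (nuTri1 φ) ς|) := by
  have sin_nonneg : 0 ≤ sin φ := sin_nonneg_of_nonneg_of_le_pi hφ0 (by linarith [pi_pos])
  have bound := two_mul_norm_smul_sub_smul_le sin_nonneg (sin_le_sin_add_pi_div_three hφ0 hφ1)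
    (dot2 (nuTri1 φ) ς) (dot2 (nuTri2 φ) ς)
  simp only [smul_eq_mul, sin_mul_dot2_nuTri1_sub, norm_eq_abs] at bound
  rw [abs_mul, abs_of_nonneg (by positivity : 0 ≤ √3 / 2)] at bound
  linarith

theorem sqrt_three_mul_div_sin_le_FTri {φ b : ℝ} (hφ0 : 0 ≤ φ) (hφ1 : φ ≤ π / 3) (hb : 0 ≤ b)
    {ς : Fin 2 → ℝ} (hς : ς 0 ≠ 0) : √3 * b / sin (φ + π / 3) ≤ FTri φ b ς := by
  have sin_pos : 0 < sin (φ + π / 3) :=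
    sin_pos_of_pos_of_lt_pi (by linarith [pi_pos]) (by linarith [pi_pos])
  rw [FTri_eq, div_le_div_iff₀ sin_pos (abs_pos.2 hς)]
  linarith [mul_le_mul_of_nonneg_left (sqrt_three_mul_abs_le_sin_mul_sum hφ0 hφ1 ς) hb]

theorem FTri_eq_of_dot2_nuTri2_eq_zero (φ b : ℝ) {ς : Fin 2 → ℝ} (hς : ς 0 ≠ 0)
    (horth : dot2 (nuTri2 φ) ς = 0) : FTri φ b ς = √3 * b / |sin (φ + π / 3)| := by
  have frame : sin (φ + π / 3) * dot2 (nuTri1 φ) ς = √3 / 2 * ς 0 := by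
    simpa [horth] using sin_mul_dot2_nuTri1_sub φ ς
  have sin_ne_zero : sin (φ + π / 3) ≠ 0 := by
    intro h
    simp [h, hς] at frame
  have abs_frame := congrArg abs frame
  rw [abs_mul, abs_mul, abs_of_nonneg (by positivity : 0 ≤ √3 / 2)] at abs_frame
  rw [FTri_eq, horth, abs_zero, zero_sub, abs_neg,
    div_eq_div_iff (abs_ne_zero.2 hς) (abs_ne_zero.2 sin_ne_zero)]
  linear_combination 2 * b * abs_frame

theorem unit2.apply_zero_ne_zero {θ : ℝ} {ς : Fin 2 → ℝ} (hς : unit2 ς) (hθ : sin θ ≠ 0)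
    (horth : dot2 (unitDirection θ) ς = 0) : ς 0 ≠ 0 := by
  intro h0
  have h1 : ς 1 = 0 := by simpa [dot2, unitDirection, h0, hθ] using horth
  simp [unit2, h0, h1] at hς

theorem unit2_unitDirection (θ : ℝ) : unit2 (unitDirection θ) := cos_sq_add_sin_sq θ

theorem dot2_unitDirection (α β : ℝ) :
    dot2 (unitDirection α) (unitDirection β) = cos (α - β) := (cos_sub α β).symm

/-- Optimal cleavage direction for the rotated triangular lattice:
the minimum over unit vectors `ς` with `e₁·ς ≠ 0` of the fracture-energy quotient equals
`√3·β̄ / sin(φ + π/3)` and is attained at the unit vector orthogonal to `ν₂`. -/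
theorem optimal_cleavage_triangular_lattice
    (φ : ℝ) (hφ0 : 0 ≤ φ) (hφ1 : φ < Real.pi / 3) (b : ℝ) (hb : 0 < b) :
    IsLeast {v : ℝ | ∃ ς : Fin 2 → ℝ, unit2 ς ∧ ς 0 ≠ 0 ∧ v = FTri φ b ς}
      (Real.sqrt 3 * b / Real.sin (φ + Real.pi / 3)) ∧
    ∀ ς : Fin 2 → ℝ, unit2 ς → dot2 (nuTri2 φ) ς = 0 →
      ς 0 ≠ 0 ∧ FTri φ b ς = Real.sqrt 3 * b / Real.sin (φ + Real.pi / 3) := by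
  have sin_pos : 0 < sin (φ + π / 3) :=
    sin_pos_of_pos_of_lt_pi (by linarith [pi_pos]) (by linarith)
  have attained (ς : Fin 2 → ℝ) (hς : unit2 ς) (horth : dot2 (nuTri2 φ) ς = 0) :
      ς 0 ≠ 0 ∧ FTri φ b ς = √3 * b / sin (φ + π / 3) := by
    have h0 := hς.apply_zero_ne_zero sin_pos.ne' (nuTri2_eq_unitDirection φ ▸ horth)
    exact ⟨h0, abs_of_pos sin_pos ▸ FTri_eq_of_dot2_nuTri2_eq_zero φ b h0 horth⟩
  refine ⟨⟨?_, ?_⟩, attained⟩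
  · have normal_unit := unit2_unitDirection (φ + π / 3 - π / 2)
    have normal_orth : dot2 (nuTri2 φ) (unitDirection (φ + π / 3 - π / 2)) = 0 := by
      rw [nuTri2_eq_unitDirection, dot2_unitDirection, sub_sub_cancel, cos_pi_div_two]
    obtain ⟨h0, value⟩ := attained _ normal_unit normal_orth
    exact ⟨_, normal_unit, h0, value.symm⟩
  · rintro _ ⟨ς, -, h0, rfl⟩
    exact sqrt_three_mul_div_sin_le_FTri hφ0 hφ1.le hb.le h0

end Cleavage
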